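/- arXiv:2108.05195 — 2 statements merged into one kernel-verified Lean document; each statement's English description precedes it below -/
import Mathlib

section
/- The iterated integral I = ∫₀¹ ∫_y¹ ( √(1 + y² − x²) − (1 − x + y) ) dx dy is equal to (log 2)/3 − 1/6. -/
open Real

/-!
For fixed `y > 0`, the integral of `√(1 + y² - x²)` is the area under an arc of the circle of
radius `√(1 + y²)`, between its points `(y, 1)` and `(1, y)`. These are mirror images in the
diagonal, so the triangle contributions `x * √(1 + y² - x²) / 2` at the two endpoints cancel and
only the sector, of angle `π / 2 - 2 * arctan y`, remains. Integrating `(1 + y²) * arctan y` by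
parts turns the arctangent into the rational function `(y + y³ / 3) / (1 + y²)`, whose
non-polynomial part produces the logarithm.
-/

lemma hasDerivAt_sqrt_sub_sq {a x : ℝ} (hx : 0 < a - x ^ 2) :
    HasDerivAt (fun t => √(a - t ^ 2)) (-x / √(a - x ^ 2)) x := by
  convert ((hasDerivAt_pow 2 x).const_sub a).sqrt hx.ne' using 1
  field_simp
  norm_num [mul_comm]

lemma hasDerivAt_arctan_div_sqrt_sub_sq {a x : ℝ} (hx : 0 < a - x ^ 2) :
    HasDerivAt (fun t => arctan (t / √(a - t ^ 2))) (1 / √(a - x ^ 2)) x := by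
  have hs : 0 < √(a - x ^ 2) := sqrt_pos.mpr hx
  refine ((hasDerivAt_id' x).fun_div (hasDerivAt_sqrt_sub_sq hx) hs.ne').arctan.congr_deriv ?_
  have hsq : √(a - x ^ 2) ^ 2 = a - x ^ 2 := sq_sqrt hx.le
  field_simp
  rw [hsq]
  ring_nf

lemma hasDerivAt_primitive_sqrt_sub_sq {a x : ℝ} (hx : 0 < a - x ^ 2) :
    HasDerivAt (fun t => (t * √(a - t ^ 2) + a * arctan (t / √(a - t ^ 2))) / 2)
      √(a - x ^ 2) x := by
  have hs : √(a - x ^ 2) ≠ 0 := (sqrt_pos.mpr hx).ne'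
  have hsq : √(a - x ^ 2) ^ 2 = a - x ^ 2 := sq_sqrt hx.le
  refine ((((hasDerivAt_id' x).fun_mul (hasDerivAt_sqrt_sub_sq hx)).fun_add
    ((hasDerivAt_arctan_div_sqrt_sub_sq hx).const_mul a)).div_const 2).congr_deriv ?_
  field_simp
  linear_combination -hsq

lemma integral_sqrt_sub_sq {a b c : ℝ} (hb : b ^ 2 < a) (hc : c ^ 2 < a) :
    ∫ x in b..c, √(a - x ^ 2) =
      (c * √(a - c ^ 2) + a * arctan (c / √(a - c ^ 2))) / 2 -
        (b * √(a - b ^ 2) + a * arctan (b / √(a - b ^ 2))) / 2 := by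
  refine intervalIntegral.integral_eq_sub_of_hasDerivAt
    (fun x hx => hasDerivAt_primitive_sqrt_sub_sq ?_)
    (Continuous.intervalIntegrable (by fun_prop) _ _)
  have hconvex : Convex ℝ {t : ℝ | t ^ 2 < a} := by
    simpa using (even_two.convexOn_pow (𝕜 := ℝ)).convex_lt a
  rw [← segment_eq_uIcc] at hx
  exact sub_pos.mpr (hconvex.segment_subset hb hc hx)

lemma integral_sqrt_sq_add_sq_sub_sq {b c : ℝ} (hb : 0 < b) (hc : 0 < c) :
    ∫ x in b..c, √(c ^ 2 + b ^ 2 - x ^ 2) = (c ^ 2 + b ^ 2) * (π / 4 - arctan (b / c)) := by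
  have harctan : arctan (c / b) = π / 2 - arctan (b / c) := by
    rw [← inv_div, arctan_inv_of_pos (div_pos hb hc)]
  rw [integral_sqrt_sub_sq (by nlinarith) (by nlinarith), add_sub_cancel_left, add_sub_cancel_right,
    sqrt_sq hb.le, sqrt_sq hc.le, harctan]
  ring

lemma integral_sub_id_add (b c : ℝ) : ∫ x in b..c, (c - x + b) = (c ^ 2 - b ^ 2) / 2 := by
  have hreflect :=
    intervalIntegral.integral_comp_sub_left (fun x : ℝ => x) (a := b) (b := c) (c + b)
  rw [add_sub_cancel_left, add_sub_cancel_right, integral_id] at hreflect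
  simpa only [sub_add_eq_add_sub] using hreflect

lemma integral_sqrt_sq_add_sq_sub_sq_sub_linear {b c : ℝ} (hb : 0 < b) (hc : 0 < c) :
    ∫ x in b..c, (√(c ^ 2 + b ^ 2 - x ^ 2) - (c - x + b)) =
      (c ^ 2 + b ^ 2) * (π / 4 - arctan (b / c)) - (c ^ 2 - b ^ 2) / 2 := by
  rw [intervalIntegral.integral_sub (Continuous.intervalIntegrable (by fun_prop) _ _)
    (Continuous.intervalIntegrable (by fun_prop) _ _), integral_sqrt_sq_add_sq_sub_sq hb hc,
    integral_sub_id_add]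

lemma hasDerivAt_primitive_one_add_sq_mul_arctan (y : ℝ) :
    HasDerivAt (fun t => (t + t ^ 3 / 3) * arctan t - t ^ 2 / 6 - log (1 + t ^ 2) / 3)
      ((1 + y ^ 2) * arctan y) y := by
  have hpos : 1 + y ^ 2 ≠ 0 := by positivity
  have hcubic := (hasDerivAt_id' y).fun_add ((hasDerivAt_pow 3 y).div_const 3)
  have hlog := (((hasDerivAt_pow 2 y).const_add 1).log hpos).div_const 3
  refine (((hcubic.fun_mul (hasDerivAt_arctan y)).fun_sub
    ((hasDerivAt_pow 2 y).div_const 6)).fun_sub hlog).congr_deriv ?_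
  norm_num
  field_simp
  ring

lemma integral_one_add_sq_mul_arctan (a b : ℝ) :
    ∫ y in a..b, (1 + y ^ 2) * arctan y =
      ((b + b ^ 3 / 3) * arctan b - b ^ 2 / 6 - log (1 + b ^ 2) / 3) -
        ((a + a ^ 3 / 3) * arctan a - a ^ 2 / 6 - log (1 + a ^ 2) / 3) :=
  intervalIntegral.integral_eq_sub_of_hasDerivAt
    (fun y _ => hasDerivAt_primitive_one_add_sq_mul_arctan y)
    (Continuous.intervalIntegrable (by fun_prop) _ _)

lemma integral_one_add_sq_mul_pi_div_four_sub_arctan :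
    ∫ y in (0:ℝ)..1, (1 + y ^ 2) * (π / 4 - arctan y) = log 2 / 3 + 1 / 6 := by
  have hpoly : ∫ y in (0:ℝ)..1, (1 + y ^ 2) = 4 / 3 := by
    rw [intervalIntegral.integral_add (Continuous.intervalIntegrable (by fun_prop) _ _)
      (Continuous.intervalIntegrable (by fun_prop) _ _), intervalIntegral.integral_const,
      integral_pow]
    norm_num
  simp only [mul_sub]
  rw [intervalIntegral.integral_sub (Continuous.intervalIntegrable (by fun_prop) _ _)
    (Continuous.intervalIntegrable (by fun_prop) _ _), intervalIntegral.integral_mul_const,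
    hpoly, integral_one_add_sq_mul_arctan, arctan_one, arctan_zero]
  norm_num
  ring

theorem iterated_integral_curved_piece :
    ∫ y in (0:ℝ)..1, ∫ x in y..1, (Real.sqrt (1 + y ^ 2 - x ^ 2) - (1 - x + y)) =
      Real.log 2 / 3 - 1 / 6 := by
  have inner {y : ℝ} (hy : 0 < y) : ∫ x in y..1, (√(1 + y ^ 2 - x ^ 2) - (1 - x + y)) =
      (1 + y ^ 2) * (π / 4 - arctan y) - (1 - y ^ 2) / 2 := by
    simpa only [one_pow, div_one] using integral_sqrt_sq_add_sq_sub_sq_sub_linear hy one_pos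
  have linear_part : ∫ y in (0:ℝ)..1, (1 - y ^ 2) / 2 = 1 / 3 := by
    rw [intervalIntegral.integral_div, intervalIntegral.integral_sub
      (Continuous.intervalIntegrable (by fun_prop) _ _)
      (Continuous.intervalIntegrable (by fun_prop) _ _), intervalIntegral.integral_const,
      integral_pow]
    norm_num
  rw [intervalIntegral.integral_congr_Ioo_of_le zero_le_one fun y hy => inner hy.1,
    intervalIntegral.integral_sub (Continuous.intervalIntegrable (by fun_prop) _ _)
      (Continuous.intervalIntegrable (by fun_prop) _ _),
    integral_one_add_sq_mul_pi_div_four_sub_arctan, linear_part]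
  ring
end

section
/- The first-octant solid R₁ = {(x,y,z) ∈ ℝ³ : x ≥ 0, y ≥ 0, z ≥ 0, x² + y² − z² ≤ 1, y² + z² − x² ≤ 1, z² + x² − y² ≤ 1} has Lebesgue volume equal to 1/6 + 1/3 + 3·((log 2)/3 − 1/6); that is, Vol(R₁) = 3I + 1/2 where I = (log 2)/3 − 1/6 is the volume of one curved piece. -/
open MeasureTheory Real

/-!
The solid is invariant under permutations of the coordinates, so its volume is `3!` times that of
its part in the chamber `0 ≤ z < y < x`, where the only active inequality is `x² + y² - z² ≤ 1`.
In the coordinates `(x, y / x, z / x) = (x, s, t)` this part lies over the triangle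
`0 ≤ t < s < 1` and below the graph of `(1 + s² - t²) ^ (-1 / 2)`, so its volume is
`⅓ ∬ (1 + s² - t²) ^ (-3 / 2) dt ds = ⅓ ∫₀¹ s / (1 + s²) ds = log 2 / 6`.
-/

section PermutationSymmetry

variable {ι : Type*} [Fintype ι] {n : ℕ}

lemma ae_apply_ne {i j : ι} (hij : i ≠ j) : ∀ᵐ v : ι → ℝ, v i ≠ v j := by
  classical
  let d : (ι → ℝ) →ₗ[ℝ] ℝ := (LinearMap.proj i : (ι → ℝ) →ₗ[ℝ] ℝ) - LinearMap.proj j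
  have hd : LinearMap.ker d ≠ ⊤ := by
    rw [Ne, LinearMap.ker_eq_top]
    exact fun h => by simpa [d, hij.symm] using LinearMap.congr_fun h (Pi.single i 1)
  have hker : {v : ι → ℝ | ¬ v i ≠ v j} = LinearMap.ker d := by
    ext v
    simp [d, sub_eq_zero]
  rw [ae_iff, hker]
  exact Measure.addHaar_submodule volume _ hd

lemma ae_injective : ∀ᵐ v : ι → ℝ, Function.Injective v := by
  have hne : ∀ᵐ v : ι → ℝ, ∀ i j, i ≠ j → v i ≠ v j := by
    simpa only [ae_all_iff] using fun i j => ae_apply_ne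
  filter_upwards [hne] with v hv i j
  exact not_imp_not.1 (hv i j)

lemma measurePreserving_comp_perm {α : Type*} [MeasureSpace α] [SigmaFinite (volume : Measure α)]
    (σ : Equiv.Perm ι) : MeasurePreserving fun v : ι → α => v ∘ σ :=
  (volume_measurePreserving_piCongrLeft (fun _ : ι => α) σ).symm

instance {α : Type*} [MeasurableSpace α] :
    MeasurableConstSMul (Equiv.Perm ι)ᵈᵐᵃ (ι → α) where
  measurable_const_smul σ := measurable_pi_lambda _ fun i =>
    measurable_pi_apply (DomMulAct.mk.symm σ i)

instance {α : Type*} [MeasureSpace α] [SigmaFinite (volume : Measure α)] :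
    SMulInvariantMeasure (Equiv.Perm ι)ᵈᵐᵃ (ι → α) volume where
  measure_preimage_smul σ _ hA :=
    (measurePreserving_comp_perm (DomMulAct.mk.symm σ)).measure_preimage hA.nullMeasurableSet

lemma existsUnique_perm_strictAnti_comp {α : Type*} [LinearOrder α] {v : Fin n → α}
    (hv : Function.Injective v) : ∃! σ : Equiv.Perm (Fin n), StrictAnti (v ∘ σ) := by
  let σ : Equiv.Perm (Fin n) := Fin.revPerm.trans (Tuple.sort v)
  have hσ : Antitone (v ∘ σ) := (Tuple.monotone_sort v).comp_antitone Fin.rev_anti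
  exact ⟨σ, hσ.strictAnti_of_injective (hv.comp σ.injective), fun τ hτ =>
    Equiv.coe_fn_injective (hv.comp_left (Tuple.unique_antitone hτ.antitone hσ))⟩

open Pointwise

lemma isFundamentalDomain_strictAnti :
    IsFundamentalDomain (Equiv.Perm (Fin n))ᵈᵐᵃ {v : Fin n → ℝ | StrictAnti v} where
  nullMeasurableSet := by
    refine MeasurableSet.nullMeasurableSet ?_
    simp only [StrictAnti]
    measurability
  ae_covers := by
    filter_upwards [ae_injective] with v hv
    exact DomMulAct.mk.surjective.exists.2 (existsUnique_perm_strictAnti_comp hv).exists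
  aedisjoint σ τ hne := by
    have hdisj : Disjoint (σ • {v : Fin n → ℝ | StrictAnti v}) (τ • {v | StrictAnti v}) := by
      refine Set.disjoint_left.2 fun v hσ hτ => hne ?_
      rw [Set.mem_smul_set_iff_inv_smul_mem] at hσ hτ
      have hv : Function.Injective v :=
        (Equiv.injective_comp (DomMulAct.mk.symm σ⁻¹) v).1 (StrictAnti.injective hσ)
      exact inv_injective <| DomMulAct.mk.symm.injective <|
        (existsUnique_perm_strictAnti_comp hv).unique hσ hτ
    exact hdisj.aedisjoint

lemma volume_eq_factorial_mul_volume_inter_strictAnti {A : Set (Fin n → ℝ)}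
    (hA : ∀ (σ : Equiv.Perm (Fin n)) (v : Fin n → ℝ), v ∘ σ ∈ A ↔ v ∈ A) :
    volume A = n.factorial * volume (A ∩ {v | StrictAnti v}) := by
  have hinv (σ : (Equiv.Perm (Fin n))ᵈᵐᵃ) : σ • A = A := by
    ext v
    rw [Set.mem_smul_set_iff_inv_smul_mem]
    exact hA _ v
  have : Finite (Equiv.Perm (Fin n))ᵈᵐᵃ := .of_equiv _ DomMulAct.mk
  have hcard : Nat.card (Equiv.Perm (Fin n))ᵈᵐᵃ = n.factorial := by
    rw [Nat.card_congr DomMulAct.mk.symm, Nat.card_perm, Nat.card_fin]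
  rw [isFundamentalDomain_strictAnti.measure_eq_card_smul_of_smul_ae_eq_self A
    fun σ => (hinv σ).eventuallyEq, hcard, nsmul_eq_mul]

end PermutationSymmetry

/-- The identification of triples indexed by `Fin 3` with iterated pairs, `v ↦ (v 0, v 1, v 2)`,
the analogue of `MeasurableEquiv.finTwoArrow`. -/
def finThreeArrow (α : Type*) [MeasurableSpace α] : (Fin 3 → α) ≃ᵐ α × α × α :=
  (MeasurableEquiv.piFinSuccAbove (fun _ => α) 0).trans
    ((MeasurableEquiv.refl α).prodCongr MeasurableEquiv.finTwoArrow)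

lemma volume_preserving_finThreeArrow (α : Type*) [MeasureSpace α]
    [SigmaFinite (volume : Measure α)] : MeasurePreserving (finThreeArrow α) :=
  ((MeasurePreserving.id volume).prod (volume_preserving_finTwoArrow α)).comp
    (volume_preserving_piFinSuccAbove (fun _ => α) 0)

lemma volume_setOf_finThree {α : Type*} [MeasureSpace α] [SigmaFinite (volume : Measure α)]
    (P : α → α → α → Prop) :
    volume {v : Fin 3 → α | P (v 0) (v 1) (v 2)} =
      volume {p : α × α × α | P p.1 p.2.1 p.2.2} :=
  (volume_preserving_finThreeArrow α).measure_preimage_equiv {p | P p.1 p.2.1 p.2.2}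

lemma setLIntegral_setOf_mem_and_mem {α β : Type*} [MeasurableSpace α] [MeasurableSpace β]
    {μ : Measure α} {ν : Measure β} [SFinite ν] {A : Set α} {B : α → Set β}
    (hA : MeasurableSet A) (hAB : MeasurableSet {p : α × β | p.1 ∈ A ∧ p.2 ∈ B p.1})
    {f : α × β → ENNReal} (hf : Measurable f) :
    ∫⁻ p in {p : α × β | p.1 ∈ A ∧ p.2 ∈ B p.1}, f p ∂μ.prod ν =
      ∫⁻ x in A, ∫⁻ y in B x, f (x, y) ∂ν ∂μ := by
  rw [← lintegral_indicator hAB, lintegral_prod _ (hf.indicator hAB).aemeasurable,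
    ← lintegral_indicator hA]
  refine lintegral_congr fun x => ?_
  by_cases hx : x ∈ A
  · have hBx : MeasurableSet (B x) := by
      simpa [Set.preimage, hx] using measurable_prodMk_left (x := x) hAB
    rw [Set.indicator_of_mem hx, ← lintegral_indicator hBx]
    refine lintegral_congr fun y => ?_
    by_cases hy : y ∈ B x <;> simp [hx, hy]
  · simp [Set.indicator, hx]

lemma lintegral_Ioc_ofReal_eq_sub_of_hasDerivAt {F f : ℝ → ℝ} {a b : ℝ} (hab : a ≤ b)
    (hcont : ContinuousOn F (Set.Icc a b)) (hderiv : ∀ x ∈ Set.Ioo a b, HasDerivAt F (f x) x)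
    (hnonneg : ∀ x ∈ Set.Ioo a b, 0 ≤ f x) :
    ∫⁻ x in Set.Ioc a b, ENNReal.ofReal (f x) = ENNReal.ofReal (F b - F a) := by
  have hint : IntegrableOn f (Set.Ioc a b) :=
    intervalIntegral.integrableOn_deriv_of_nonneg hcont hderiv hnonneg
  have hae : 0 ≤ᵐ[volume.restrict (Set.Ioc a b)] f := by
    rw [← restrict_Ioo_eq_restrict_Ioc]
    exact ae_restrict_of_forall_mem measurableSet_Ioo hnonneg
  rw [← ofReal_integral_eq_lintegral_ofReal hint hae, ← intervalIntegral.integral_of_le hab,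
    intervalIntegral.integral_eq_sub_of_hasDerivAt_of_le hab hcont hderiv
      ((intervalIntegrable_iff_integrableOn_Ioc_of_le hab).2 hint)]

open Module (finrank)

lemma measure_prod_setOf_le_comp_inv_smul {E : Type*} [NormedAddCommGroup E] [NormedSpace ℝ E]
    [FiniteDimensional ℝ E] [MeasurableSpace E] [BorelSpace E] (μ : Measure E)
    [μ.IsAddHaarMeasure] {B : Set E} (hB : MeasurableSet B) {ρ : E → ℝ} (hρ : Measurable ρ)
    (hρ_nonneg : ∀ u ∈ B, 0 ≤ ρ u) :
    (volume.prod μ) {p : ℝ × E | 0 < p.1 ∧ p.1⁻¹ • p.2 ∈ B ∧ p.1 ≤ ρ (p.1⁻¹ • p.2)} =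
      ENNReal.ofReal (1 / (finrank ℝ E + 1)) *
      ∫⁻ u in B, ENNReal.ofReal (ρ u ^ (finrank ℝ E + 1)) ∂μ := by
  set d := finrank ℝ E
  let S : Set (ℝ × E) := {p | 0 < p.1 ∧ p.1⁻¹ • p.2 ∈ B ∧ p.1 ≤ ρ (p.1⁻¹ • p.2)}
  have hS : MeasurableSet S := by
    have hsmul : Measurable fun p : ℝ × E => p.1⁻¹ • p.2 := by fun_prop
    exact (measurableSet_lt measurable_const measurable_fst).inter
      ((hsmul hB).inter (measurableSet_le measurable_fst (hρ.comp hsmul)))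
  have hslice {r : ℝ} (hr : 0 < r) : μ (Prod.mk r ⁻¹' S) =
      μ.restrict B {u | r ≤ ρ u} * ENNReal.ofReal (r ^ d) := by
    have hpre : Prod.mk r ⁻¹' S = (r⁻¹ • ·) ⁻¹' ({u | r ≤ ρ u} ∩ B) := by
      ext v
      simp [S, hr, and_comm]
    rw [hpre, Measure.addHaar_preimage_smul μ (inv_ne_zero hr.ne'),
      Measure.restrict_apply (measurableSet_le measurable_const hρ), mul_comm]
    simp [abs_of_pos hr, d]
  have hslices : (volume.prod μ) S =
      ∫⁻ r in Set.Ioi 0, μ.restrict B {u | r ≤ ρ u} * ENNReal.ofReal (r ^ d) := by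
    rw [Measure.prod_apply hS, ← setLIntegral_congr_fun measurableSet_Ioi fun r hr => hslice hr,
      ← lintegral_indicator measurableSet_Ioi]
    refine lintegral_congr fun r => ?_
    by_cases hr : 0 < r <;> simp [S, hr]
  have hcake : ∫⁻ u in B, ENNReal.ofReal (ρ u ^ (d + 1)) ∂μ =
      ENNReal.ofReal (d + 1) * (volume.prod μ) S := by
    have hexp : ((d + 1 : ℕ) : ℝ) - 1 = d := by simp
    rw [hslices, ← Nat.cast_add_one]
    simpa only [hexp, Real.rpow_natCast] using lintegral_rpow_eq_lintegral_meas_le_mul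
      (μ.restrict B) (ae_restrict_of_forall_mem hB hρ_nonneg) hρ.aemeasurable
      (p := (d + 1 : ℕ)) (by positivity)
  rw [hcake, ← mul_assoc, ← ENNReal.ofReal_mul (by positivity), one_div_mul_cancel (by positivity),
    ENNReal.ofReal_one, one_mul]

/-- The triangle over which the chamber `0 ≤ z < y < x` is a cone, in the affine chart
`(s, t) = (y / x, z / x)`. -/
def chamberBase : Set (ℝ × ℝ) := {q | q.1 ∈ Set.Ioo 0 1 ∧ q.2 ∈ Set.Ico 0 q.1}

/-- The largest `x` for which `x • (1, s, t)` satisfies `x² + y² - z² ≤ 1`. -/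
noncomputable def chamberRadius (q : ℝ × ℝ) : ℝ := (√(1 + q.1 ^ 2 - q.2 ^ 2))⁻¹

lemma measurableSet_chamberBase : MeasurableSet chamberBase := by
  simp only [chamberBase, Set.mem_Ioo, Set.mem_Ico]
  measurability

lemma measurable_chamberRadius : Measurable chamberRadius := by
  unfold chamberRadius
  fun_prop

lemma chamberRadius_nonneg (q : ℝ × ℝ) : 0 ≤ chamberRadius q :=
  inv_nonneg.2 (Real.sqrt_nonneg _)

lemma inv_smul_mem_chamberBase_iff {x y z : ℝ} (hx : 0 < x) :
    x⁻¹ • (y, z) ∈ chamberBase ↔ 0 ≤ z ∧ z < y ∧ y < x := by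
  simp only [chamberBase, Set.mem_ofPred_eq, Prod.smul_mk, smul_eq_mul, Set.mem_Ioo, Set.mem_Ico]
  rw [mul_pos_iff_of_pos_left (inv_pos.2 hx), mul_nonneg_iff_of_pos_left (inv_pos.2 hx),
    mul_lt_mul_iff_right₀ (inv_pos.2 hx), inv_mul_lt_one₀ hx]
  grind

lemma le_chamberRadius_inv_smul_iff {x y z : ℝ} (hx : 0 < x) (hz : 0 ≤ z) (hzy : z < y) :
    x ≤ chamberRadius (x⁻¹ • (y, z)) ↔ x ^ 2 + y ^ 2 - z ^ 2 ≤ 1 := by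
  have hpos : 0 < 1 + (x⁻¹ * y) ^ 2 - (x⁻¹ * z) ^ 2 := by
    have : (x⁻¹ * z) ^ 2 < (x⁻¹ * y) ^ 2 := by gcongr
    linarith
  simp only [chamberRadius, Prod.smul_mk, smul_eq_mul]
  rw [← Real.sqrt_inv, Real.le_sqrt hx.le (by positivity), ← one_div, le_div_iff₀ hpos]
  field_simp

lemma setOf_chamber_eq_setOf_le_chamberRadius :
    {p : ℝ × ℝ × ℝ | 0 ≤ p.2.2 ∧ p.2.2 < p.2.1 ∧ p.2.1 < p.1 ∧
      p.1 ^ 2 + p.2.1 ^ 2 - p.2.2 ^ 2 ≤ 1} =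
    {p | 0 < p.1 ∧ p.1⁻¹ • p.2 ∈ chamberBase ∧ p.1 ≤ chamberRadius (p.1⁻¹ • p.2)} := by
  ext ⟨x, y, z⟩
  simp only [Set.mem_ofPred_eq]
  constructor
  · rintro ⟨hz, hzy, hyx, h⟩
    have hx : 0 < x := hz.trans_lt (hzy.trans hyx)
    exact ⟨hx, (inv_smul_mem_chamberBase_iff hx).2 ⟨hz, hzy, hyx⟩,
      (le_chamberRadius_inv_smul_iff hx hz hzy).2 h⟩
  · rintro ⟨hx, hbase, h⟩
    obtain ⟨hz, hzy, hyx⟩ := (inv_smul_mem_chamberBase_iff hx).1 hbase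
    exact ⟨hz, hzy, hyx, (le_chamberRadius_inv_smul_iff hx hz hzy).1 h⟩

lemma lintegral_Ioc_ofReal_inv_sqrt_add_one_sub_sq {s : ℝ} (hs : 0 < s) :
    ∫⁻ t in Set.Ioc 0 s, ENNReal.ofReal ((√(1 + s ^ 2 - t ^ 2))⁻¹ ^ 3) =
      ENNReal.ofReal (s / (1 + s ^ 2)) := by
  have hpos {t : ℝ} (ht : t ∈ Set.Icc 0 s) : 0 < 1 + s ^ 2 - t ^ 2 := by
    nlinarith [ht.1, ht.2]
  let F (t : ℝ) : ℝ := t / ((1 + s ^ 2) * √(1 + s ^ 2 - t ^ 2))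
  have hcont : ContinuousOn F (Set.Icc 0 s) := by
    refine continuousOn_id.div (by fun_prop) fun t ht => ?_
    have := Real.sqrt_pos.2 (hpos ht)
    positivity
  have hderiv (t : ℝ) (ht : t ∈ Set.Ioo 0 s) :
      HasDerivAt F ((√(1 + s ^ 2 - t ^ 2))⁻¹ ^ 3) t := by
    have hp := hpos (Set.Ioo_subset_Icc_self ht)
    have : 0 < √(1 + s ^ 2 - t ^ 2) := Real.sqrt_pos.2 hp
    have hinner : HasDerivAt (fun t : ℝ => 1 + s ^ 2 - t ^ 2) (-(2 * t)) t := by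
      simpa using (hasDerivAt_pow 2 t).const_sub (1 + s ^ 2)
    refine ((hasDerivAt_id' t).div ((hinner.sqrt hp.ne').const_mul (1 + s ^ 2))
      (by positivity)).congr_deriv ?_
    have hsq := Real.sq_sqrt hp.le
    field_simp
    grind
  rw [lintegral_Ioc_ofReal_eq_sub_of_hasDerivAt hs.le hcont hderiv fun t _ => by positivity]
  simp [F]

lemma lintegral_Ioc_ofReal_div_one_add_sq :
    ∫⁻ s in Set.Ioc (0 : ℝ) 1, ENNReal.ofReal (s / (1 + s ^ 2)) =
      ENNReal.ofReal (Real.log 2 / 2) := by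
  have hderiv (s : ℝ) : HasDerivAt (fun s => Real.log (1 + s ^ 2) / 2) (s / (1 + s ^ 2)) s := by
    have hinner : HasDerivAt (fun s : ℝ => 1 + s ^ 2) (2 * s) s := by
      simpa using (hasDerivAt_pow 2 s).const_add 1
    exact ((hinner.log (by positivity)).div_const 2).congr_deriv (by ring)
  rw [lintegral_Ioc_ofReal_eq_sub_of_hasDerivAt zero_le_one
    (fun s _ => (hderiv s).continuousAt.continuousWithinAt) (fun s _ => hderiv s)
    fun s hs => div_nonneg hs.1.le (by positivity)]
  norm_num

lemma lintegral_chamberBase_ofReal_chamberRadius_cube :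
    ∫⁻ q in chamberBase, ENNReal.ofReal (chamberRadius q ^ 3) ∂volume.prod volume =
      ENNReal.ofReal (Real.log 2 / 2) := by
  have hmeas : Measurable fun q => ENNReal.ofReal (chamberRadius q ^ 3) :=
    (measurable_chamberRadius.pow_const 3).ennreal_ofReal
  calc ∫⁻ q in chamberBase, ENNReal.ofReal (chamberRadius q ^ 3) ∂volume.prod volume
    _ = ∫⁻ s in Set.Ioc (0 : ℝ) 1, ∫⁻ t in Set.Ioc 0 s,
        ENNReal.ofReal (chamberRadius (s, t) ^ 3) := by
      simp only [← restrict_Ioo_eq_restrict_Ioc (a := (0 : ℝ)) (b := 1),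
        ← restrict_Ico_eq_restrict_Ioc]
      exact setLIntegral_setOf_mem_and_mem measurableSet_Ioo measurableSet_chamberBase hmeas
    _ = ∫⁻ s in Set.Ioc (0 : ℝ) 1, ENNReal.ofReal (s / (1 + s ^ 2)) :=
      setLIntegral_congr_fun measurableSet_Ioc fun s hs =>
        lintegral_Ioc_ofReal_inv_sqrt_add_one_sub_sq hs.1
    _ = ENNReal.ofReal (Real.log 2 / 2) := lintegral_Ioc_ofReal_div_one_add_sq

lemma volume_chamber :
    volume {p : ℝ × ℝ × ℝ | 0 ≤ p.2.2 ∧ p.2.2 < p.2.1 ∧ p.2.1 < p.1 ∧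
      p.1 ^ 2 + p.2.1 ^ 2 - p.2.2 ^ 2 ≤ 1} = ENNReal.ofReal (Real.log 2 / 6) := by
  have hdim : finrank ℝ (ℝ × ℝ) = 2 := by simp
  rw [setOf_chamber_eq_setOf_le_chamberRadius, Measure.volume_eq_prod, Measure.volume_eq_prod,
    measure_prod_setOf_le_comp_inv_smul _ measurableSet_chamberBase measurable_chamberRadius
      fun q _ => chamberRadius_nonneg q,
    hdim, lintegral_chamberBase_ofReal_chamberRadius_cube, ← ENNReal.ofReal_mul (by positivity)]
  congr 1
  push_cast
  ring

/-- The intersection of the closed positive orthant with the solid quadrics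
`∑ j, v j ^ 2 ≤ 1 + 2 * v i ^ 2`. For `ι = Fin 3` this is `R₁`, written so that its invariance under
permutations is apparent. -/
def orthantSolid (ι : Type*) [Fintype ι] : Set (ι → ℝ) :=
  {v | (∀ i, 0 ≤ v i) ∧ ∀ i, ∑ j, v j ^ 2 - 2 * v i ^ 2 ≤ 1}

lemma comp_perm_mem_orthantSolid_iff {ι : Type*} [Fintype ι] (σ : Equiv.Perm ι) (v : ι → ℝ) :
    v ∘ σ ∈ orthantSolid ι ↔ v ∈ orthantSolid ι := by
  simp only [orthantSolid, Set.mem_ofPred_eq, Function.comp_apply,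
    Equiv.sum_comp σ fun i => v i ^ 2]
  exact and_congr (σ.forall_congr_right (q := fun i => 0 ≤ v i))
    (σ.forall_congr_right (q := fun i => ∑ j, v j ^ 2 - 2 * v i ^ 2 ≤ 1))

lemma mem_orthantSolid_iff_of_antitone {n : ℕ} {v : Fin (n + 1) → ℝ} (hv : Antitone v) :
    v ∈ orthantSolid (Fin (n + 1)) ↔
      0 ≤ v (Fin.last n) ∧ ∑ j, v j ^ 2 - 2 * v (Fin.last n) ^ 2 ≤ 1 := by
  refine ⟨fun h => ⟨h.1 _, h.2 _⟩, fun ⟨hlast, hsum⟩ => ?_⟩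
  have hle (i : Fin (n + 1)) : v (Fin.last n) ≤ v i := hv (Fin.le_last i)
  refine ⟨fun i => hlast.trans (hle i), fun i => ?_⟩
  linarith [hsum, pow_le_pow_left₀ hlast (hle i) 2]

lemma orthantSolid_finThree_eq :
    orthantSolid (Fin 3) = {v | 0 ≤ v 0 ∧ 0 ≤ v 1 ∧ 0 ≤ v 2 ∧ v 0 ^ 2 + v 1 ^ 2 - v 2 ^ 2 ≤ 1 ∧
      v 1 ^ 2 + v 2 ^ 2 - v 0 ^ 2 ≤ 1 ∧ v 2 ^ 2 + v 0 ^ 2 - v 1 ^ 2 ≤ 1} := by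
  ext v
  have forall_iff (p : Fin 3 → Prop) : (∀ i, p i) ↔ p 0 ∧ p 1 ∧ p 2 := by
    simp [Fin.forall_fin_succ]
  simp only [orthantSolid, Set.mem_ofPred_eq, forall_iff, Fin.sum_univ_three]
  grind

lemma orthantSolid_finThree_inter_strictAnti :
    orthantSolid (Fin 3) ∩ {v | StrictAnti v} =
      {v | 0 ≤ v 2 ∧ v 2 < v 1 ∧ v 1 < v 0 ∧ v 0 ^ 2 + v 1 ^ 2 - v 2 ^ 2 ≤ 1} := by
  ext v
  have hanti : StrictAnti v ↔ v 1 < v 0 ∧ v 2 < v 1 := by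
    simp [Fin.strictAnti_iff_succ_lt, Fin.forall_fin_two]
  have hmem (hv : StrictAnti v) :
      v ∈ orthantSolid (Fin 3) ↔ 0 ≤ v 2 ∧ v 0 ^ 2 + v 1 ^ 2 - v 2 ^ 2 ≤ 1 := by
    refine (mem_orthantSolid_iff_of_antitone hv.antitone).trans (and_congr_right fun _ => ?_)
    rw [Fin.sum_univ_three]
    change v 0 ^ 2 + v 1 ^ 2 + v 2 ^ 2 - 2 * v 2 ^ 2 ≤ 1 ↔ _
    ring_nf
  simp only [Set.mem_inter_iff, Set.mem_ofPred_eq]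
  rw [and_congr_left hmem, hanti]
  tauto

lemma volume_orthantSolid_finThree :
    volume (orthantSolid (Fin 3)) = ENNReal.ofReal (Real.log 2) := by
  have hfactorial : (Nat.factorial 3 : ℝ) * (Real.log 2 / 6) = Real.log 2 := by
    norm_num [Nat.factorial]
    ring
  rw [volume_eq_factorial_mul_volume_inter_strictAnti comp_perm_mem_orthantSolid_iff,
    orthantSolid_finThree_inter_strictAnti,
    volume_setOf_finThree fun x y z => 0 ≤ z ∧ z < y ∧ y < x ∧ x ^ 2 + y ^ 2 - z ^ 2 ≤ 1,
    volume_chamber, ← ENNReal.ofReal_natCast, ← ENNReal.ofReal_mul (by positivity), hfactorial]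

theorem volume_first_octant_decomposition :
    volume {p : ℝ × ℝ × ℝ |
        0 ≤ p.1 ∧ 0 ≤ p.2.1 ∧ 0 ≤ p.2.2 ∧
        p.1 ^ 2 + p.2.1 ^ 2 - p.2.2 ^ 2 ≤ 1 ∧
        p.2.1 ^ 2 + p.2.2 ^ 2 - p.1 ^ 2 ≤ 1 ∧
        p.2.2 ^ 2 + p.1 ^ 2 - p.2.1 ^ 2 ≤ 1} =
      ENNReal.ofReal (1 / 6 + 1 / 3 + 3 * (Real.log 2 / 3 - 1 / 6)) := by
  have hlog : 1 / 6 + 1 / 3 + 3 * (Real.log 2 / 3 - 1 / 6) = Real.log 2 := by ring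
  rw [hlog, ← volume_orthantSolid_finThree, orthantSolid_finThree_eq]
  exact (volume_setOf_finThree fun x y z => 0 ≤ x ∧ 0 ≤ y ∧ 0 ≤ z ∧ x ^ 2 + y ^ 2 - z ^ 2 ≤ 1 ∧
    y ^ 2 + z ^ 2 - x ^ 2 ≤ 1 ∧ z ^ 2 + x ^ 2 - y ^ 2 ≤ 1).symm
end
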